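/- With the elliptic data below, put κ₁ := 2·(2Π(l₁², k)/K(k) − 1). Then ∫_{η₁⁻¹}^{η₁} (s + s⁻¹ − κ₁) ds / √((η₁ − s)(s − η₁⁻¹)(η₂ − s)(s − η₂⁻¹)) = 0. -/

import Mathlib

/-- Complete elliptic integral of the first kind:
`K(k) = ∫₀¹ ds/√((1−s²)(1−k²s²))`. -/
noncomputable def ellK (k : ℝ) : ℝ :=
  ∫ s in (0 : ℝ)..1, 1 / Real.sqrt ((1 - s ^ 2) * (1 - k ^ 2 * s ^ 2))

/-- Complete elliptic integral of the third kind: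
`Π(m,k) = ∫₀¹ ds/((1−ms²)√((1−s²)(1−k²s²)))`. -/
noncomputable def ellPi (m k : ℝ) : ℝ :=
  ∫ s in (0 : ℝ)..1, 1 / ((1 - m * s ^ 2) * Real.sqrt ((1 - s ^ 2) * (1 - k ^ 2 * s ^ 2)))

/-- `l(x) = (x−1)/(x+1)`. -/
noncomputable def lpar (x : ℝ) : ℝ := (x - 1) / (x + 1)

/-! The differential `ds / √((η₁ - s)(s - η₁⁻¹)(η₂ - s)(s - η₂⁻¹))` is symmetric under `s ↦ s⁻¹`,
which the substitution `s = (1 + t) / (1 - t)` turns into `t ↦ -t`. Each pair of branch points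
`η, η⁻¹` becomes `±l`, so the radicand is a multiple of `(l₁² - t²)(l₂² - t²) / (1 - t)⁴`, while
`s + s⁻¹ = 4 / (1 - t²) - 2`. Rescaling by `t = l₁ u` then gives, for every constant `κ` in place of
`κ₁`, a positive multiple of `4 Π(l₁², k) - (2 + κ) K(k)`, and `κ₁` is the zero of this expression.
-/

open MeasureTheory Set

/-- The Cayley transform `t ↦ (1 + t) / (1 - t)`, the inverse of `lpar`, used as the
substitution that carries `(-l₁, l₁)` to the gap `(η₁⁻¹, η₁)`. -/
noncomputable def cayley (t : ℝ) : ℝ := (1 + t) / (1 - t)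

theorem integral_neg_self_of_even {E : Type*} [NormedAddCommGroup E] [NormedSpace ℝ E]
    {f : ℝ → E} {a : ℝ} (heven : f.Even) (hf : IntervalIntegrable f volume 0 a) :
    ∫ x in -a..a, f x = (2 : ℝ) • ∫ x in 0..a, f x := by
  have hf_neg : IntervalIntegrable f volume (-a) 0 := by
    simpa only [heven.eq, neg_zero] using ((IntervalIntegrable.iff_comp_neg (by simp)).mp hf).symm
  have hreflect : ∫ x in -a..0, f x = ∫ x in 0..a, f x := by
    simpa only [heven.eq, neg_zero] using
      (intervalIntegral.integral_comp_neg (a := 0) (b := a) f).symm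
  rw [← intervalIntegral.integral_add_adjacent_intervals hf_neg hf, hreflect, two_smul]

section Cayley

variable {a b l m t x : ℝ}

theorem cayley_lpar (hx : x ≠ -1) : cayley (lpar x) = x := by
  have hx' : x + 1 ≠ 0 := fun h ↦ hx (by linarith)
  have hadd : 1 + lpar x = 2 * x / (x + 1) := by unfold lpar; field_simp; ring
  have hsub : 1 - lpar x = 2 / (x + 1) := by unfold lpar; field_simp; ring
  rw [cayley, hadd, hsub]
  field_simp

theorem cayley_neg (t : ℝ) : cayley (-t) = (cayley t)⁻¹ := by
  simp only [cayley, inv_div, sub_neg_eq_add, ← sub_eq_add_neg]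

theorem cayley_sub_cayley (ha : a ≠ 1) (hb : b ≠ 1) :
    cayley a - cayley b = 2 * (a - b) / ((1 - a) * (1 - b)) := by
  have ha' : 1 - a ≠ 0 := sub_ne_zero.mpr ha.symm
  have hb' : 1 - b ≠ 0 := sub_ne_zero.mpr hb.symm
  unfold cayley
  field_simp
  ring

theorem cayley_add_inv (ht : t ^ 2 ≠ 1) : cayley t + (cayley t)⁻¹ = 4 / (1 - t ^ 2) + -2 := by
  have hfac : 1 - t ^ 2 = (1 - t) * (1 + t) := by ring
  obtain ⟨hsub, hadd⟩ : 1 - t ≠ 0 ∧ 1 + t ≠ 0 :=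
    mul_ne_zero_iff.mp (hfac ▸ sub_ne_zero.mpr ht.symm)
  rw [hfac, cayley, inv_div]
  field_simp
  ring

theorem cayley_sub_mul_sub_inv (hl : l ^ 2 ≠ 1) (ht : t ≠ 1) :
    (cayley l - cayley t) * (cayley t - (cayley l)⁻¹) =
      4 * (l ^ 2 - t ^ 2) / ((1 - l ^ 2) * (1 - t) ^ 2) := by
  have hl₁ : l ≠ 1 := fun h ↦ hl (by rw [h, one_pow])
  have hl₂ : -l ≠ 1 := fun h ↦ hl (by rw [← neg_sq, h, one_pow])
  rw [← cayley_neg, cayley_sub_cayley hl₁ ht, cayley_sub_cayley ht hl₂, div_mul_div_comm]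
  congr 1 <;> ring

theorem hasDerivAt_cayley (ht : t ≠ 1) : HasDerivAt cayley (2 / (1 - t) ^ 2) t := by
  have hadd : HasDerivAt (fun t : ℝ ↦ 1 + t) 1 t := (hasDerivAt_id t).const_add 1
  have hsub : HasDerivAt (fun t : ℝ ↦ 1 - t) (-1) t := (hasDerivAt_id t).const_sub 1
  exact (hadd.div hsub (sub_ne_zero.mpr ht.symm)).congr_deriv (by ring)

theorem integral_cayley (f : ℝ → ℝ) (ha : a < 1) (hb : b < 1) :
    ∫ s in cayley a..cayley b, f s = ∫ t in a..b, f (cayley t) * (2 / (1 - t) ^ 2) := by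
  have hderiv : ∀ t ∈ uIcc a b, HasDerivAt cayley (2 / (1 - t) ^ 2) t := fun t ht ↦
    hasDerivAt_cayley (ht.2.trans_lt (max_lt ha hb)).ne
  refine (intervalIntegral.integral_comp_mul_deriv_of_deriv_nonneg
    (HasDerivAt.continuousOn hderiv) (fun t ht ↦ ?_) fun t _ ↦ by positivity).symm
  exact hderiv t (Ioo_subset_Icc_self ht)

theorem sqrt_gap_cayley (hl : l ^ 2 < 1) (hm : m ^ 2 < 1) (ht : t < 1) :
    √((cayley l - cayley t) * (cayley t - (cayley l)⁻¹) *
        (cayley m - cayley t) * (cayley t - (cayley m)⁻¹)) =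
      4 * √((l ^ 2 - t ^ 2) * (m ^ 2 - t ^ 2)) /
        (√((1 - l ^ 2) * (1 - m ^ 2)) * (1 - t) ^ 2) := by
  have hrad : (cayley l - cayley t) * (cayley t - (cayley l)⁻¹) *
        (cayley m - cayley t) * (cayley t - (cayley m)⁻¹) =
      (4 / (1 - t) ^ 2) ^ 2 *
        ((l ^ 2 - t ^ 2) * (m ^ 2 - t ^ 2) / ((1 - l ^ 2) * (1 - m ^ 2))) := by
    rw [mul_assoc, cayley_sub_mul_sub_inv hl.ne ht.ne, cayley_sub_mul_sub_inv hm.ne ht.ne,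
      div_mul_div_comm, div_pow, div_mul_div_comm]
    congr 1 <;> ring
  rw [hrad, Real.sqrt_mul (by positivity), Real.sqrt_sq (by positivity),
    Real.sqrt_div' _ (mul_pos (sub_pos.mpr hl) (sub_pos.mpr hm)).le, div_mul_div_comm,
    mul_comm (√((1 - l ^ 2) * (1 - m ^ 2)))]

theorem integral_div_sqrt_gap_cayley (f : ℝ → ℝ) (hl : l ^ 2 < 1) (hm : m ^ 2 < 1) :
    ∫ s in (cayley l)⁻¹..cayley l, f s /
        √((cayley l - s) * (s - (cayley l)⁻¹) * (cayley m - s) * (s - (cayley m)⁻¹)) =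
      √((1 - l ^ 2) * (1 - m ^ 2)) / 2 *
        ∫ t in -l..l, f (cayley t) / √((l ^ 2 - t ^ 2) * (m ^ 2 - t ^ 2)) := by
  obtain ⟨hl_neg, hl_lt⟩ := abs_lt.mp ((sq_lt_one_iff_abs_lt_one l).mp hl)
  rw [← cayley_neg l, integral_cayley _ (by linarith) hl_lt,
    ← intervalIntegral.integral_const_mul, cayley_neg l]
  refine intervalIntegral.integral_congr fun t ht ↦ ?_
  have ht_lt : t < 1 := ht.2.trans_lt (max_lt (by linarith) hl_lt)
  have ht_ne : 1 - t ≠ 0 := (sub_pos.mpr ht_lt).ne'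
  simp only [sqrt_gap_cayley hl hm ht_lt]
  field_simp
  ring

end Cayley

section Lpar

variable {x y : ℝ}

theorem lpar_pos (hx : 1 < x) : 0 < lpar x :=
  div_pos (by linarith) (by linarith)

theorem lpar_lt_one (hx : -1 < x) : lpar x < 1 := by
  rw [lpar, div_lt_one (by linarith)]
  linarith

theorem lpar_lt_lpar (hx : -1 < x) (hxy : x < y) : lpar x < lpar y := by
  rw [lpar, lpar, div_lt_div_iff₀ (by linarith) (by linarith)]
  linarith

end Lpar

section Elliptic

variable {k l m n s : ℝ}

theorem ellPi_zero (k : ℝ) : ellPi 0 k = ellK k := by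
  simp only [ellPi, ellK, zero_mul, sub_zero, one_mul]

theorem one_sub_mul_sq_pos (hn : n < 1) (hs : s ^ 2 ≤ 1) : 0 < 1 - n * s ^ 2 := by
  rcases (sq_nonneg s).eq_or_lt with hs₀ | hs₀
  · rw [← hs₀, mul_zero, sub_zero]
    exact one_pos
  · linarith [mul_lt_mul_of_pos_right hn hs₀]

theorem intervalIntegrable_ellPi (hn : n < 1) (hk : k ^ 2 < 1) :
    IntervalIntegrable
      (fun s ↦ 1 / ((1 - n * s ^ 2) * √((1 - s ^ 2) * (1 - k ^ 2 * s ^ 2)))) volume 0 1 := by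
  have hsq : ∀ s ∈ uIcc (0 : ℝ) 1, s ^ 2 ≤ 1 := fun s hs ↦ by
    rw [uIcc_of_le zero_le_one] at hs
    exact pow_le_one₀ hs.1 hs.2
  have hsing : IntervalIntegrable (fun s : ℝ ↦ √(1 - s ^ 2)⁻¹) volume 0 1 :=
    Polynomial.Chebyshev.intervalIntegrable_sqrt_one_sub_sq_inv.mono_set
      (uIcc_subset_uIcc_right (by simp))
  have hcont : ContinuousOn (fun s ↦ ((1 - n * s ^ 2) * √(1 - k ^ 2 * s ^ 2))⁻¹) (uIcc 0 1) :=
    ContinuousOn.inv₀ (by fun_prop) fun s hs ↦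
      (mul_pos (one_sub_mul_sq_pos hn (hsq s hs))
        (Real.sqrt_pos.mpr (one_sub_mul_sq_pos hk (hsq s hs)))).ne'
  refine (hsing.mul_continuousOn hcont).congr fun s hs ↦ ?_
  have hs_nonneg : 0 ≤ 1 - s ^ 2 := sub_nonneg.mpr (hsq s (uIoc_subset_uIcc hs))
  simp only [Real.sqrt_mul hs_nonneg, one_div, mul_inv, Real.sqrt_inv]
  ring

theorem ellPi_pos (hn : n < 1) (hk : k ^ 2 < 1) : 0 < ellPi n k := by
  refine intervalIntegral.intervalIntegral_pos_of_pos_on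
    (intervalIntegrable_ellPi hn hk) (fun s ⟨hs₀, hs₁⟩ ↦ ?_) one_pos
  have hs : s ^ 2 < 1 := pow_lt_one₀ hs₀.le hs₁ two_ne_zero
  exact one_div_pos.mpr (mul_pos (one_sub_mul_sq_pos hn hs.le)
    (Real.sqrt_pos.mpr (mul_pos (sub_pos.mpr hs) (one_sub_mul_sq_pos hk hs.le))))

theorem ellK_pos (hk : k ^ 2 < 1) : 0 < ellK k :=
  ellPi_zero k ▸ ellPi_pos zero_lt_one hk

theorem integral_eq_two_mul_ellPi_add_ellK (a b : ℝ) (hn : n < 1) (hk : k ^ 2 < 1) :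
    ∫ u in -1..1, (a / (1 - n * u ^ 2) + b) / √((1 - u ^ 2) * (1 - k ^ 2 * u ^ 2)) =
      2 * (a * ellPi n k + b * ellK k) := by
  have hPi := (intervalIntegrable_ellPi hn hk).const_mul a
  have hK := (intervalIntegrable_ellPi zero_lt_one hk).const_mul b
  have hsplit : ∀ u, (a / (1 - n * u ^ 2) + b) / √((1 - u ^ 2) * (1 - k ^ 2 * u ^ 2)) =
      a * (1 / ((1 - n * u ^ 2) * √((1 - u ^ 2) * (1 - k ^ 2 * u ^ 2)))) +
        b * (1 / ((1 - 0 * u ^ 2) * √((1 - u ^ 2) * (1 - k ^ 2 * u ^ 2)))) := fun u ↦ by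
    rw [zero_mul, sub_zero, one_mul, add_div, div_div, mul_one_div, mul_one_div]
  simp only [hsplit]
  rw [integral_neg_self_of_even (fun u ↦ by simp only [neg_sq]) (hPi.add hK),
    intervalIntegral.integral_add hPi hK, intervalIntegral.integral_const_mul,
    intervalIntegral.integral_const_mul, ← ellPi, ← ellPi, ellPi_zero, smul_eq_mul]

theorem integral_div_sqrt_sq_sub_mul_sq_sub (f : ℝ → ℝ) (hl : 0 < l) (hm : 0 < m) :
    ∫ t in -l..l, f t / √((l ^ 2 - t ^ 2) * (m ^ 2 - t ^ 2)) =
      m⁻¹ * ∫ u in -1..1, f (l * u) / √((1 - u ^ 2) * (1 - (l / m) ^ 2 * u ^ 2)) := by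
  have hsqrt : ∀ u, √((l ^ 2 - (l * u) ^ 2) * (m ^ 2 - (l * u) ^ 2)) =
      l * m * √((1 - u ^ 2) * (1 - (l / m) ^ 2 * u ^ 2)) := fun u ↦ by
    have hrad : (l ^ 2 - (l * u) ^ 2) * (m ^ 2 - (l * u) ^ 2) =
        (l * m) ^ 2 * ((1 - u ^ 2) * (1 - (l / m) ^ 2 * u ^ 2)) := by field_simp
    rw [hrad, Real.sqrt_mul (sq_nonneg _), Real.sqrt_sq (mul_pos hl hm).le]
  have hscale := intervalIntegral.mul_integral_comp_mul_left (a := -1) (b := 1) (c := l)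
    (f := fun t ↦ f t / √((l ^ 2 - t ^ 2) * (m ^ 2 - t ^ 2)))
  simp only [hsqrt, mul_neg, mul_one] at hscale
  rw [← hscale, ← intervalIntegral.integral_const_mul, ← intervalIntegral.integral_const_mul]
  refine intervalIntegral.integral_congr fun u _ ↦ ?_
  field_simp

end Elliptic

theorem integral_gap_eq_ellPi_sub_ellK {l m : ℝ} (hl : 0 < l) (hlm : l < m) (hm : m < 1)
    (κ : ℝ) :
    ∫ s in (cayley l)⁻¹..cayley l, (s + s⁻¹ - κ) /
        √((cayley l - s) * (s - (cayley l)⁻¹) * (cayley m - s) * (s - (cayley m)⁻¹)) =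
      √((1 - l ^ 2) * (1 - m ^ 2)) / m *
        (4 * ellPi (l ^ 2) (l / m) - (2 + κ) * ellK (l / m)) := by
  have hm₀ : 0 < m := hl.trans hlm
  have hl_sq : l ^ 2 < 1 := pow_lt_one₀ hl.le (hlm.trans hm) two_ne_zero
  have hm_sq : m ^ 2 < 1 := pow_lt_one₀ hm₀.le hm two_ne_zero
  have hk_sq : (l / m) ^ 2 < 1 :=
    pow_lt_one₀ (by positivity) ((div_lt_one hm₀).mpr hlm) two_ne_zero
  have hweight : ∀ t ∈ uIcc (-l) l,
      cayley t + (cayley t)⁻¹ - κ = 4 / (1 - t ^ 2) + (-2 - κ) := fun t ht ↦ by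
    rw [uIcc_of_le (by linarith)] at ht
    rw [cayley_add_inv ((sq_le_sq' ht.1 ht.2).trans_lt hl_sq).ne]
    ring
  calc
    _ = √((1 - l ^ 2) * (1 - m ^ 2)) / 2 * ∫ t in -l..l,
          (cayley t + (cayley t)⁻¹ - κ) / √((l ^ 2 - t ^ 2) * (m ^ 2 - t ^ 2)) :=
      integral_div_sqrt_gap_cayley _ hl_sq hm_sq
    _ = √((1 - l ^ 2) * (1 - m ^ 2)) / 2 * ∫ t in -l..l,
          (4 / (1 - t ^ 2) + (-2 - κ)) / √((l ^ 2 - t ^ 2) * (m ^ 2 - t ^ 2)) := by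
      rw [intervalIntegral.integral_congr fun t ht ↦ congrArg (· / _) (hweight t ht)]
    _ = √((1 - l ^ 2) * (1 - m ^ 2)) / 2 * (m⁻¹ *
          (2 * (4 * ellPi (l ^ 2) (l / m) + (-2 - κ) * ellK (l / m)))) := by
      rw [integral_div_sqrt_sq_sub_mul_sq_sub (fun t ↦ 4 / (1 - t ^ 2) + (-2 - κ)) hl hm₀]
      simp only [mul_pow l]
      rw [integral_eq_two_mul_ellPi_add_ellK _ _ hl_sq hk_sq]
    _ = _ := by ring

/- STATEMENT 13: With 1 < η₁ < η₂, l₁ = (η₁−1)/(η₁+1), l₂ = (η₂−1)/(η₂+1),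
k = l₁/l₂, and κ₁ := 2·(2Π(l₁², k)/K(k) − 1), one has
∫_{η₁⁻¹}^{η₁} (s + s⁻¹ − κ₁) ds / √((η₁ − s)(s − η₁⁻¹)(η₂ − s)(s − η₂⁻¹)) = 0. -/
theorem stmt13 (η₁ η₂ : ℝ) (h1 : 1 < η₁) (h2 : η₁ < η₂) :
    (∫ s in η₁⁻¹..η₁,
        (s + s⁻¹ -
            2 * (2 * ellPi (lpar η₁ ^ 2) (lpar η₁ / lpar η₂) /
              ellK (lpar η₁ / lpar η₂) - 1)) /
          Real.sqrt ((η₁ - s) * (s - η₁⁻¹) * (η₂ - s) * (s - η₂⁻¹))) = 0 := by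
  have hl : 0 < lpar η₁ := lpar_pos h1
  have hlm : lpar η₁ < lpar η₂ := lpar_lt_lpar (by linarith) h2
  have hm : lpar η₂ < 1 := lpar_lt_one (by linarith)
  have hK : 0 < ellK (lpar η₁ / lpar η₂) := ellK_pos
    (pow_lt_one₀ (div_pos hl (hl.trans hlm)).le ((div_lt_one (hl.trans hlm)).mpr hlm) two_ne_zero)
  have hgap := integral_gap_eq_ellPi_sub_ellK hl hlm hm
    (2 * (2 * ellPi (lpar η₁ ^ 2) (lpar η₁ / lpar η₂) / ellK (lpar η₁ / lpar η₂) - 1))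
  rw [cayley_lpar (by linarith), cayley_lpar (by linarith)] at hgap
  rw [hgap, mul_eq_zero]
  right
  field_simp
  ring
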